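/- Let G be a controllable simple graph on n vertices with adjacency matrix A, and let Q_G be the set of all n×n rational orthogonal matrices Q with Qe = e such that Q^T A Q is a (0,1)-matrix. Then G is determined by its generalized spectrum if and only if every matrix in Q_G is a permutation matrix. -/

import Mathlib

/-!
Let `A`, `B` be the adjacency matrices of `G`, `H`, let `e` be the all-ones vector and `J = eeᵀ`.

If `G` and `H` have the same generalized spectrum, then `A`, `B` and also `A - J`, `B - J` share
their characteristic polynomials. By the matrix determinant lemma,
`χ_{A - J} - χ_A = eᵀ adj(X - A) e`, and this polynomial together with `χ_A` determines all walk
counts `eᵀ Aᵏ e` (`walkCount_eq`). These counts are the entries of `W_Gᵀ W_G` and `W_Gᵀ A W_G`, so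
both matrices agree with their analogues for `H`. Hence `W_H` is invertible too, and
`Q = W_G W_H⁻¹` is orthogonal, fixes `e`, and satisfies `Qᵀ A Q = B`
(`GenCospectral.exists_orthogonal`). If `Q` is a permutation matrix, it is an isomorphism.

Conversely, for `Q ∈ 𝒬_G` the matrix `Qᵀ A Q` is the adjacency matrix of a graph with the same
generalized spectrum (`MemQG.isAdjMatrix`, `genCospectral_of_conj`). An isomorphism to it gives a
permutation matrix `P` with `Pᵀ A P = Qᵀ A Q`. Then `Qᵀ Aᵏ e = (Qᵀ A Q)ᵏ e = Pᵀ Aᵏ e` for all `k`,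
that is `Qᵀ W_G = Pᵀ W_G`, and `Q = P` because `W_G` is invertible (`eq_of_conj_eq`).
-/

open Polynomial Matrix

/-- The discriminant of an `n × n` integer matrix `A`:
`Δ_A = (-1)^(n(n-1)/2) · res(φ, φ')`, where `φ` is the (monic) characteristic polynomial
of `A`.  Since `φ` is monic, the resultant `res(φ, φ')` equals the norm of the image of
`φ'` in the quotient ring `ℤ[x]/(φ)`. -/
noncomputable def matrixDisc {n : ℕ} (A : Matrix (Fin n) (Fin n) ℤ) : ℤ :=
  (-1) ^ (n * (n - 1) / 2) *
    Algebra.norm ℤ (AdjoinRoot.mk A.charpoly (Polynomial.derivative A.charpoly))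

/-- A rational matrix is an integer matrix if all its entries are integers. -/
def IsIntegerMatrix {n : ℕ} (M : Matrix (Fin n) (Fin n) ℚ) : Prop :=
  ∀ i j, ∃ z : ℤ, M i j = (z : ℚ)

/-- A signed permutation matrix: each row and column has exactly one nonzero entry,
equal to `±1`. -/
def IsSignedPermMatrix {n : ℕ} (Q : Matrix (Fin n) (Fin n) ℚ) : Prop :=
  ∃ (σ : Equiv.Perm (Fin n)) (ε : Fin n → ℚ), (∀ j, ε j = 1 ∨ ε j = -1) ∧
    ∀ i j, Q i j = if i = σ j then ε j else 0

/-- A permutation matrix. -/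
def IsPermMatrix {n : ℕ} (Q : Matrix (Fin n) (Fin n) ℚ) : Prop :=
  ∃ σ : Equiv.Perm (Fin n), ∀ i j, Q i j = if i = σ j then 1 else 0

/-- `ℓ` is the level of the rational matrix `Q`, i.e. the smallest positive integer `ℓ`
such that `ℓ • Q` is an integer matrix. -/
def IsLevel {n : ℕ} (Q : Matrix (Fin n) (Fin n) ℚ) (ℓ : ℕ) : Prop :=
  0 < ℓ ∧ IsIntegerMatrix ((ℓ : ℚ) • Q) ∧
    ∀ m : ℕ, 0 < m → IsIntegerMatrix ((m : ℚ) • Q) → ℓ ≤ m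

/-- The walk matrix `W = [e, Ae, …, A^{n-1}e]` of a graph, where `e` is the all-ones
vector. -/
def walkMatrix {n : ℕ} (G : SimpleGraph (Fin n)) [DecidableRel G.Adj] :
    Matrix (Fin n) (Fin n) ℤ :=
  Matrix.of fun i j => ((G.adjMatrix ℤ ^ (j : ℕ)) *ᵥ fun _ => 1) i

/-- Two graphs have the same generalized spectrum: their adjacency matrices are
cospectral, and the adjacency matrices of their complements are cospectral. -/
def GenCospectral {n : ℕ} (G H : SimpleGraph (Fin n))
    [DecidableRel G.Adj] [DecidableRel H.Adj] : Prop :=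
  (G.adjMatrix ℤ).charpoly = (H.adjMatrix ℤ).charpoly ∧
    (Gᶜ.adjMatrix ℤ).charpoly = (Hᶜ.adjMatrix ℤ).charpoly

/-- `G` is determined by its generalized spectrum: every graph with the same
generalized spectrum as `G` is isomorphic to `G`. -/
def IsDGS {n : ℕ} (G : SimpleGraph (Fin n)) [DecidableRel G.Adj] : Prop :=
  ∀ (H : SimpleGraph (Fin n)) [DecidableRel H.Adj], GenCospectral G H → Nonempty (G ≃g H)

/-- Membership in the set `𝒬_G` of rational orthogonal matrices `Q` with `Qe = e`
such that `QᵀAQ` is a `(0,1)`-matrix, where `A` is the adjacency matrix of `G`. -/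
def MemQG {n : ℕ} (G : SimpleGraph (Fin n)) [DecidableRel G.Adj]
    (Q : Matrix (Fin n) (Fin n) ℚ) : Prop :=
  Qᵀ * Q = 1 ∧ (Q *ᵥ fun _ => 1) = (fun _ => 1) ∧
    ∀ i j, (Qᵀ * G.adjMatrix ℚ * Q) i j = 0 ∨ (Qᵀ * G.adjMatrix ℚ * Q) i j = 1

/-! ### The resolvent and walk counts -/

/-- **Matrix determinant lemma**, in its adjugate form, over an integral domain. -/
theorem det_add_vecMulVec_of_det_ne_zero {R : Type*} [CommRing R] [IsDomain R] {n : ℕ}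
    (M : Matrix (Fin n) (Fin n) R) (hM : M.det ≠ 0) (u v : Fin n → R) :
    (M + vecMulVec u v).det = M.det + v ⬝ᵥ (M.adjugate *ᵥ u) := by
  rcases Nat.eq_zero_or_pos n with rfl | hn
  · simp
  -- Multiplying by the adjugate reduces the claim to a scalar matrix plus one of rank one.
  have h1 : M.adjugate * (M + vecMulVec u v) =
      scalar (Fin n) M.det - vecMulVec (-(M.adjugate *ᵥ u)) v := by
    rw [mul_add, adjugate_mul, mul_vecMulVec, neg_vecMulVec, sub_neg_eq_add,
      smul_one_eq_diagonal]
    rfl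
  have h2 := congrArg Matrix.det h1
  rw [det_mul, det_adjugate, ← eval_charpoly, charpoly_vecMulVec] at h2
  simp only [Fintype.card_fin, eval_sub, eval_pow, eval_X, eval_smul, smul_eq_mul,
    neg_dotProduct] at h2
  apply mul_left_cancel₀ (pow_ne_zero (n - 1) hM)
  rw [h2, dotProduct_comm v]
  obtain ⟨m, rfl⟩ : ∃ m, n = m + 1 := ⟨n - 1, by omega⟩
  simp only [Nat.add_sub_cancel]
  ring

/-- The bilinear form `vᵀ adj(X - A) u`, the numerator of the generating function
`vᵀ (X - A)⁻¹ u = ∑ₖ (vᵀ Aᵏ u) X⁻ᵏ⁻¹`. -/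
noncomputable def resolventNum {n : ℕ} (A : Matrix (Fin n) (Fin n) ℤ) (v u : Fin n → ℤ) : ℤ[X] :=
  (fun i => C (v i)) ⬝ᵥ ((charmatrix A).adjugate *ᵥ fun i => C (u i))

theorem resolventNum_eq_charpoly_sub {n : ℕ} (A : Matrix (Fin n) (Fin n) ℤ) (v u : Fin n → ℤ) :
    resolventNum A v u = (A - vecMulVec u v).charpoly - A.charpoly := by
  have h := det_add_vecMulVec_of_det_ne_zero (charmatrix A) (charpoly_monic A).ne_zero
    (fun i => C (u i)) (fun i => C (v i))
  have h2 : charmatrix (A - vecMulVec u v) =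
      charmatrix A + vecMulVec (fun i => C (u i)) (fun i => C (v i)) := by
    ext1 i j
    simp [charmatrix_apply, vecMulVec_apply]
    ring
  rw [Matrix.charpoly, h2, h, Matrix.charpoly, resolventNum]
  ring

theorem degree_resolventNum_lt {n : ℕ} (A : Matrix (Fin n) (Fin n) ℤ) (v u : Fin n → ℤ) :
    (resolventNum A v u).degree < n := by
  rw [resolventNum_eq_charpoly_sub]
  have h := degree_sub_lt_left (p := (A - vecMulVec u v).charpoly) (q := A.charpoly)
    (by simp [charpoly_degree_eq_dim]) (charpoly_monic _).ne_zero
    (by rw [charpoly_monic, charpoly_monic])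
  simpa [charpoly_degree_eq_dim] using h

/-- Since `adj(X - A) A = X adj(X - A) - χ_A`, applying `A` to `u` shifts the generating
function by one step. -/
theorem resolventNum_mulVec {n : ℕ} (A : Matrix (Fin n) (Fin n) ℤ) (v u : Fin n → ℤ) :
    resolventNum A v (A *ᵥ u) = X * resolventNum A v u - A.charpoly * C (v ⬝ᵥ u) := by
  have h1 : (fun i => C ((A *ᵥ u) i)) = (X : ℤ[X]) • (fun i => C (u i)) -
      charmatrix A *ᵥ (fun i => C (u i)) := by
    rw [charmatrix, sub_mulVec]
    ext1 i
    simp [mulVec, dotProduct]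
  have h2 : (fun i => C (v i)) ⬝ᵥ (fun i => C (u i)) = (C (v ⬝ᵥ u) : ℤ[X]) := by
    simp [dotProduct]
  rw [resolventNum, h1, mulVec_sub, mulVec_mulVec, adjugate_mul, mulVec_smul, smul_mulVec,
    one_mulVec, dotProduct_sub, dotProduct_smul, dotProduct_smul, h2]
  rfl

/-- The number `eᵀ Aᵏ e` of walks of length `k`. -/
def walkCount {n : ℕ} (A : Matrix (Fin n) (Fin n) ℤ) (k : ℕ) : ℤ :=
  (fun _ => 1) ⬝ᵥ ((A ^ k) *ᵥ fun _ => 1)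

/-- Equality of the characteristic polynomials of `A`, `B` and of `A - J`, `B - J`
forces equal walk counts: in `X f - χ c` of degree less than `n = deg χ`, the constant `c` is
determined by `f`. -/
theorem walkCount_eq {n : ℕ} (A B : Matrix (Fin n) (Fin n) ℤ) (h : A.charpoly = B.charpoly)
    (hJ : (A - vecMulVec (fun _ => 1) (fun _ => 1)).charpoly =
      (B - vecMulVec (fun _ => 1) (fun _ => 1)).charpoly) (k : ℕ) :
    walkCount A k = walkCount B k := by
  have step : ∀ (M : Matrix (Fin n) (Fin n) ℤ) (k : ℕ),
      resolventNum M (fun _ => 1) (M ^ (k + 1) *ᵥ fun _ => 1) =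
        X * resolventNum M (fun _ => 1) (M ^ k *ᵥ fun _ => 1)
          - M.charpoly * C (walkCount M k) := by
    intro M k
    rw [pow_succ', ← mulVec_mulVec, resolventNum_mulVec]
    rfl
  have key : ∀ k, resolventNum A (fun _ => 1) (A ^ k *ᵥ fun _ => 1) =
      resolventNum B (fun _ => 1) (B ^ k *ᵥ fun _ => 1) → walkCount A k = walkCount B k := by
    intro k hk
    have lead : ∀ M : Matrix (Fin n) (Fin n) ℤ, walkCount M k =
        (X * resolventNum M (fun _ => 1) (M ^ k *ᵥ fun _ => 1)).coeff n := by
      intro M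
      have h0 : (resolventNum M (fun _ => 1) (M ^ (k + 1) *ᵥ fun _ => 1)).coeff n = 0 :=
        coeff_eq_zero_of_degree_lt (degree_resolventNum_lt _ _ _)
      have h1 : M.charpoly.coeff n = 1 := by
        have := (charpoly_monic M).coeff_natDegree
        rwa [charpoly_natDegree_eq_dim, Fintype.card_fin] at this
      rw [step, coeff_sub, coeff_mul_C, h1] at h0
      linarith
    rw [lead, lead, hk]
  have all : ∀ k, resolventNum A (fun _ => 1) (A ^ k *ᵥ fun _ => 1) =
      resolventNum B (fun _ => 1) (B ^ k *ᵥ fun _ => 1) := by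
    intro k
    induction k with
    | zero => simp only [pow_zero, one_mulVec, resolventNum_eq_charpoly_sub, h, hJ]
    | succ k ih => rw [step, step, ih, key k ih, h]
  exact key k (all k)

/-! ### Generalized spectrum and walk counts -/

theorem compl_adjMatrix_eq {R : Type*} [CommRing R] {n : ℕ} (G : SimpleGraph (Fin n))
    [DecidableRel G.Adj] :
    Gᶜ.adjMatrix R = vecMulVec (fun _ => 1) (fun _ => 1) - 1 - G.adjMatrix R := by
  ext i j
  by_cases hij : i = j <;> by_cases hG : G.Adj i j <;>
    simp_all [SimpleGraph.adjMatrix_apply, vecMulVec_apply, one_apply]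

/-- `A(Gᶜ) = -(A - J) - 1`, so the spectrum of the complement is that of `A - J` reflected. -/
theorem eval_charpoly_adjMatrix_sub {n : ℕ} (G : SimpleGraph (Fin n)) [DecidableRel G.Adj]
    (t : ℤ) :
    (G.adjMatrix ℤ - vecMulVec (fun _ => 1) (fun _ => 1)).charpoly.eval t =
      (-1) ^ n * (Gᶜ.adjMatrix ℤ).charpoly.eval (-1 - t) := by
  rw [eval_charpoly, eval_charpoly, compl_adjMatrix_eq]
  have : scalar (Fin n) (-1 - t) -
      ((vecMulVec (fun _ => 1) (fun _ => 1) : Matrix (Fin n) (Fin n) ℤ) - 1 - G.adjMatrix ℤ) =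
      -(scalar (Fin n) t - (G.adjMatrix ℤ - vecMulVec (fun _ => 1) (fun _ => 1))) := by
    rw [map_sub, map_neg, map_one]
    abel
  rw [this, det_neg, Fintype.card_fin, ← mul_assoc, ← mul_pow]
  simp

theorem GenCospectral.walkCount_eq {n : ℕ} {G H : SimpleGraph (Fin n)}
    [DecidableRel G.Adj] [DecidableRel H.Adj] (h : GenCospectral G H) (k : ℕ) :
    walkCount (G.adjMatrix ℤ) k = walkCount (H.adjMatrix ℤ) k := by
  apply _root_.walkCount_eq _ _ h.1
  apply Polynomial.funext
  intro t
  rw [eval_charpoly_adjMatrix_sub, eval_charpoly_adjMatrix_sub, h.2]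

/-! ### From generalized cospectrality to an orthogonal matrix -/

theorem walkMatrix_gram {n : ℕ} (G : SimpleGraph (Fin n)) [DecidableRel G.Adj] (t : ℕ)
    (i j : Fin n) :
    ((walkMatrix G)ᵀ * (G.adjMatrix ℤ ^ t * walkMatrix G)) i j =
      walkCount (G.adjMatrix ℤ) (i + (t + j)) := by
  have hs : (G.adjMatrix ℤ ^ (i : ℕ))ᵀ = G.adjMatrix ℤ ^ (i : ℕ) := by
    rw [transpose_pow, SimpleGraph.transpose_adjMatrix]
  have h1 : ((walkMatrix G)ᵀ * (G.adjMatrix ℤ ^ t * walkMatrix G)) i j =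
      (G.adjMatrix ℤ ^ (i : ℕ) *ᵥ fun _ => 1) ⬝ᵥ
        (G.adjMatrix ℤ ^ t *ᵥ (G.adjMatrix ℤ ^ (j : ℕ) *ᵥ fun _ => 1)) := rfl
  rw [h1, mulVec_mulVec, ← pow_add, ← hs, mulVec_transpose, ← dotProduct_mulVec, mulVec_mulVec,
    ← pow_add]
  rfl

theorem GenCospectral.gram_eq {n : ℕ} {G H : SimpleGraph (Fin n)}
    [DecidableRel G.Adj] [DecidableRel H.Adj] (h : GenCospectral G H) (t : ℕ) :
    (walkMatrix G)ᵀ * (G.adjMatrix ℤ ^ t * walkMatrix G) =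
      (walkMatrix H)ᵀ * (H.adjMatrix ℤ ^ t * walkMatrix H) := by
  ext i j
  rw [walkMatrix_gram, walkMatrix_gram, h.walkCount_eq]

theorem adjMatrix_map_intCast {n : ℕ} (G : SimpleGraph (Fin n)) [DecidableRel G.Adj] :
    (Int.castRingHom ℚ).mapMatrix (G.adjMatrix ℤ) = G.adjMatrix ℚ := by
  ext i j
  by_cases h : G.Adj i j <;> simp [SimpleGraph.adjMatrix_apply, h]

/-- The rational orthogonal matrix `Q = W_G W_H⁻¹` carries `A(G)` to `A(H)`. -/
theorem GenCospectral.exists_orthogonal {n : ℕ} {G H : SimpleGraph (Fin n)}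
    [DecidableRel G.Adj] [DecidableRel H.Adj] (h : GenCospectral G H)
    (hctrl : (walkMatrix G).det ≠ 0) :
    ∃ Q : Matrix (Fin n) (Fin n) ℚ, Qᵀ * Q = 1 ∧ (Q *ᵥ fun _ => 1) = (fun _ => 1) ∧
      Qᵀ * G.adjMatrix ℚ * Q = H.adjMatrix ℚ := by
  have hdet : (walkMatrix H).det ≠ 0 := by
    have := congrArg Matrix.det (h.gram_eq 0)
    simp only [pow_zero, one_mul, det_mul, det_transpose] at this
    intro h0
    rw [h0, mul_zero] at this
    exact hctrl (mul_self_eq_zero.mp this)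
  set f := (Int.castRingHom ℚ).mapMatrix (m := Fin n)
  set V := f (walkMatrix G) with hV
  set U := f (walkMatrix H) with hU
  have hUdet : IsUnit U.det := by
    rw [hU, ← RingHom.map_det, isUnit_iff_ne_zero]
    simpa using hdet
  have hUU : U * U⁻¹ = 1 := mul_nonsing_inv _ hUdet
  have gram : ∀ t : ℕ, Vᵀ * (G.adjMatrix ℚ ^ t * V) = Uᵀ * (H.adjMatrix ℚ ^ t * U) := by
    intro t
    have h1 := congrArg f (h.gram_eq t)
    rw [map_mul, map_mul, map_mul, map_mul, map_pow, map_pow, adjMatrix_map_intCast,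
      adjMatrix_map_intCast] at h1
    exact h1
  have hUU' : (U⁻¹)ᵀ * Uᵀ = 1 := by rw [← transpose_mul, hUU, transpose_one]
  have conj : ∀ t : ℕ, (V * U⁻¹)ᵀ * G.adjMatrix ℚ ^ t * (V * U⁻¹) = H.adjMatrix ℚ ^ t := by
    intro t
    calc (V * U⁻¹)ᵀ * G.adjMatrix ℚ ^ t * (V * U⁻¹)
        = (U⁻¹)ᵀ * (Vᵀ * (G.adjMatrix ℚ ^ t * V)) * U⁻¹ := by
          rw [transpose_mul]; simp only [Matrix.mul_assoc]
      _ = ((U⁻¹)ᵀ * Uᵀ) * H.adjMatrix ℚ ^ t * (U * U⁻¹) := by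
          rw [gram]; simp only [Matrix.mul_assoc]
      _ = H.adjMatrix ℚ ^ t := by rw [hUU, hUU', one_mul, mul_one]
  refine ⟨V * U⁻¹, by simpa using conj 0, ?_, by simpa using conj 1⟩
  rcases n with _ | m
  · exact funext fun i => i.elim0
  -- The first column of each walk matrix is the all-ones vector.
  have col : ∀ (K : SimpleGraph (Fin (m + 1))) [DecidableRel K.Adj],
      f (walkMatrix K) *ᵥ Pi.single 0 1 = fun _ => 1 := by
    intro K _
    rw [mulVec_single_one]
    ext i
    simp [f, walkMatrix, col]
  have hVU : V * U⁻¹ * U = V := by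
    rw [Matrix.mul_assoc, nonsing_inv_mul _ hUdet, mul_one]
  calc (V * U⁻¹) *ᵥ (fun _ => 1) = (V * U⁻¹) *ᵥ (U *ᵥ Pi.single 0 1) := by rw [hU, col]
    _ = fun _ => 1 := by rw [mulVec_mulVec, hVU, hV, col]

/-! ### From an orthogonal matrix to generalized cospectrality -/

theorem charpoly_conj_eq {n : ℕ} {A Q : Matrix (Fin n) (Fin n) ℚ} (hQ : Qᵀ * Q = 1) :
    (Qᵀ * A * Q).charpoly = A.charpoly := by
  rw [Matrix.mul_assoc, charpoly_mul_comm, Matrix.mul_assoc, mul_eq_one_comm.mp hQ, mul_one]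

theorem transpose_mulVec_one {n : ℕ} {Q : Matrix (Fin n) (Fin n) ℚ} (hQ : Qᵀ * Q = 1)
    (he : (Q *ᵥ fun _ => 1) = (fun _ => 1)) : (Qᵀ *ᵥ fun _ => 1) = (fun _ => 1) := by
  nth_rewrite 1 [← he]
  rw [mulVec_mulVec, hQ, one_mulVec]

/-- Conjugation by `Q` with `Qe = e` fixes both `1` and `J`, hence commutes with complementation. -/
theorem genCospectral_of_conj {n : ℕ} {G H : SimpleGraph (Fin n)}
    [DecidableRel G.Adj] [DecidableRel H.Adj] {Q : Matrix (Fin n) (Fin n) ℚ}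
    (hQ : Qᵀ * Q = 1) (he : (Q *ᵥ fun _ => 1) = (fun _ => 1))
    (hGH : Qᵀ * G.adjMatrix ℚ * Q = H.adjMatrix ℚ) : GenCospectral G H := by
  have descend : ∀ (K L : SimpleGraph (Fin n)) [DecidableRel K.Adj] [DecidableRel L.Adj],
      Qᵀ * K.adjMatrix ℚ * Q = L.adjMatrix ℚ →
        (K.adjMatrix ℤ).charpoly = (L.adjMatrix ℤ).charpoly := by
    intro K L _ _ hKL
    apply Polynomial.map_injective (Int.castRingHom ℚ) Int.cast_injective
    rw [← charpoly_map, ← charpoly_map, ← RingHom.mapMatrix_apply, ← RingHom.mapMatrix_apply,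
      adjMatrix_map_intCast, adjMatrix_map_intCast, ← hKL, charpoly_conj_eq hQ]
  refine ⟨descend G H hGH, descend Gᶜ Hᶜ ?_⟩
  rw [compl_adjMatrix_eq, compl_adjMatrix_eq, ← hGH, mul_sub, mul_sub, sub_mul, sub_mul, mul_one,
    hQ, mul_vecMulVec, vecMulVec_mul, transpose_mulVec_one hQ he, ← mulVec_transpose,
    transpose_mulVec_one hQ he]

/-- If two orthogonal matrices fixing `e` conjugate `A(G)` to the same matrix, then
`Qᵀ W_G = Pᵀ W_G`, so they agree when `G` is controllable. -/
theorem eq_of_conj_eq {n : ℕ} {G : SimpleGraph (Fin n)} [DecidableRel G.Adj]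
    (hctrl : (walkMatrix G).det ≠ 0) {P Q : Matrix (Fin n) (Fin n) ℚ}
    (hP : Pᵀ * P = 1) (heP : (P *ᵥ fun _ => 1) = (fun _ => 1))
    (hQ : Qᵀ * Q = 1) (heQ : (Q *ᵥ fun _ => 1) = (fun _ => 1))
    (h : Qᵀ * G.adjMatrix ℚ * Q = Pᵀ * G.adjMatrix ℚ * P) : Q = P := by
  have iter : ∀ (R : Matrix (Fin n) (Fin n) ℚ), Rᵀ * R = 1 →
      (R *ᵥ fun _ => 1) = (fun _ => 1) → ∀ k : ℕ, Rᵀ *ᵥ (G.adjMatrix ℚ ^ k *ᵥ fun _ => 1) =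
        (Rᵀ * G.adjMatrix ℚ * R) ^ k *ᵥ fun _ => 1 := by
    intro R hR heR k
    induction k with
    | zero => simpa using transpose_mulVec_one hR heR
    | succ k ih =>
      rw [pow_succ' (Rᵀ * G.adjMatrix ℚ * R), ← mulVec_mulVec, ← ih, mulVec_mulVec, mulVec_mulVec,
        mulVec_mulVec, Matrix.mul_assoc (Rᵀ * G.adjMatrix ℚ),
        mul_eq_one_comm.mp hR, mul_one, pow_succ', Matrix.mul_assoc]
  set V := (Int.castRingHom ℚ).mapMatrix (walkMatrix G) with hV
  have hVdet : IsUnit V.det := by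
    rw [hV, ← RingHom.map_det, isUnit_iff_ne_zero]
    simpa using hctrl
  have hcol : ∀ j : Fin n, (fun i => V i j) = G.adjMatrix ℚ ^ (j : ℕ) *ᵥ fun _ => 1 := by
    intro j
    rw [← adjMatrix_map_intCast, ← map_pow]
    ext i
    simp [hV, walkMatrix, mulVec, dotProduct]
  have hW : Qᵀ * V = Pᵀ * V := by
    ext i j
    have := congrFun ((iter Q hQ heQ j).trans ((congrArg (fun M => M ^ (j : ℕ) *ᵥ fun _ => 1) h).trans
      (iter P hP heP j).symm)) i
    rw [← hcol] at this
    exact this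
  have := congrArg (· * V⁻¹) hW
  simp only [Matrix.mul_assoc, mul_nonsing_inv _ hVdet, mul_one] at this
  exact transpose_injective this

/-! ### Permutation matrices -/

/-- The permutation matrix with `P i j = 1` exactly when `i = σ j`. -/
def permMat {n : ℕ} (σ : Equiv.Perm (Fin n)) : Matrix (Fin n) (Fin n) ℚ :=
  Matrix.of fun i j => if i = σ j then 1 else 0

theorem permMat_conj {n : ℕ} (σ : Equiv.Perm (Fin n)) (M : Matrix (Fin n) (Fin n) ℚ) (i j : Fin n) :
    ((permMat σ)ᵀ * M * permMat σ) i j = M (σ i) (σ j) := by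
  simp [permMat, mul_apply]

theorem permMat_orthogonal {n : ℕ} (σ : Equiv.Perm (Fin n)) :
    (permMat σ)ᵀ * permMat σ = 1 := by
  ext i j
  have := permMat_conj σ 1 i j
  rw [mul_one] at this
  rw [this]
  simp [one_apply]

theorem permMat_mulVec_one {n : ℕ} (σ : Equiv.Perm (Fin n)) :
    (permMat σ *ᵥ fun _ => 1) = fun _ => 1 := by
  ext i
  simp [permMat, mulVec, dotProduct, ← Equiv.symm_apply_eq]

/-! ### The characterization -/

/-- A `(0,1)`-matrix orthogonally similar to `A(G)` is again an adjacency matrix: it is symmetric,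
and its diagonal entries are nonnegative with sum `tr A(G) = 0`. -/
theorem MemQG.isAdjMatrix {n : ℕ} {G : SimpleGraph (Fin n)} [DecidableRel G.Adj]
    {Q : Matrix (Fin n) (Fin n) ℚ} (h : MemQG G Q) :
    (Qᵀ * G.adjMatrix ℚ * Q).IsAdjMatrix := by
  obtain ⟨hQ, -, h01⟩ := h
  refine ⟨h01, ?_, fun i => ?_⟩
  · simp [IsSymm, transpose_mul, Matrix.mul_assoc]
  · have htr : (Qᵀ * G.adjMatrix ℚ * Q).trace = 0 := by
      rw [Matrix.mul_assoc, trace_mul_comm, Matrix.mul_assoc, mul_eq_one_comm.mp hQ, mul_one,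
        SimpleGraph.trace_adjMatrix]
    have hnn : ∀ i ∈ Finset.univ, 0 ≤ (Qᵀ * G.adjMatrix ℚ * Q) i i := by
      intro i _
      rcases h01 i i with h | h <;> simp [h]
    exact (Finset.sum_eq_zero_iff_of_nonneg hnn).mp htr i (Finset.mem_univ i)

/-- **Theorem 1.4 (Wang–Xu).** Let `G` be a controllable graph.  Then `G` is determined
by its generalized spectrum if and only if the set `𝒬_G` contains only permutation
matrices. -/
theorem dgs_iff_QG_only_permMatrices {n : ℕ} (G : SimpleGraph (Fin n))
    [DecidableRel G.Adj] (hctrl : (walkMatrix G).det ≠ 0) :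
    IsDGS G ↔ ∀ Q : Matrix (Fin n) (Fin n) ℚ, MemQG G Q → IsPermMatrix Q := by
  classical
  constructor
  · intro hdgs Q hQ
    have hadj := hQ.isAdjMatrix
    obtain ⟨horth, he, -⟩ := hQ
    have hH : Qᵀ * G.adjMatrix ℚ * Q = hadj.toGraph.adjMatrix ℚ := by
      ext i j
      rw [SimpleGraph.adjMatrix_apply]
      rcases hadj.zero_or_one i j with h | h <;> simp [Matrix.IsAdjMatrix.toGraph, h]
    obtain ⟨φ⟩ := hdgs hadj.toGraph (genCospectral_of_conj horth he hH)
    have hP : (permMat φ.symm.toEquiv)ᵀ * G.adjMatrix ℚ * permMat φ.symm.toEquiv =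
        hadj.toGraph.adjMatrix ℚ := by
      ext i j
      rw [permMat_conj, SimpleGraph.adjMatrix_apply, SimpleGraph.adjMatrix_apply]
      exact if_congr φ.symm.map_adj_iff rfl rfl
    have hQP := eq_of_conj_eq hctrl (permMat_orthogonal φ.symm.toEquiv)
      (permMat_mulVec_one φ.symm.toEquiv) horth he (hH.trans hP.symm)
    exact ⟨φ.symm.toEquiv, fun i j => congrFun (congrFun hQP i) j⟩
  · intro hperm H _ hGH
    obtain ⟨Q, hQ, he, hconj⟩ := hGH.exists_orthogonal hctrl
    obtain ⟨σ, hσ⟩ := hperm Q ⟨hQ, he, fun i j => by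
      rw [hconj, SimpleGraph.adjMatrix_apply]
      by_cases h : H.Adj i j <;> simp [h]⟩
    have hQσ : Q = permMat σ := by
      ext i j
      exact hσ i j
    refine ⟨SimpleGraph.Iso.symm ⟨σ, fun {i j} => ?_⟩⟩
    have hij := congrFun (congrFun hconj i) j
    rw [hQσ, permMat_conj, SimpleGraph.adjMatrix_apply, SimpleGraph.adjMatrix_apply] at hij
    by_cases h1 : G.Adj (σ i) (σ j) <;> by_cases h2 : H.Adj i j <;> simp_all
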